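/- If G is a Halin graph, then χ'_trans(G) ≤ 5. -/

import Mathlib

/-!
With at most five colors there is nothing to prove, since any two colorings differ by at most
five classes. So let `G = T ∪ C` be a Halin graph, `T` its tree and `C` its rim, and let the
number of colors be at least six. Planarity plays no part: it only matters that a rim edge meets
at most two other rim edges and at most two tree edges (`sparseRim_of_isHalin`).

* The rim is flexible. If `f` and `g` agree on `T`, then any rim edge `e` can be given the color
  `g e`, after the neighbors of `e` that have this color under `f` have been moved to colors not
  seen by their at most four neighbors. Such neighbors do not yet have their color under `g`, so
  the agreement of `f` with `g` grows (`rim_fix_one`), and `f` is transformed into `g`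
  (`rim_reach`).
* The colorings of `T` are connected by exchanges of two colors. With `T` rooted and `w` a vertex
  of least depth whose parent edge has different colors `a` and `b` under `f` and `g`, exchanging
  `a` and `b` below the parent of `w` corrects this edge; the edges corrected before have neither
  color or are not below the parent of `w` (`tree_swap`).
* An exchange of two colors on `T` lifts to `G` (`lift_swap`). A rim edge meets at most two tree
  edges, whose colors before and after the exchange number at most three together, so at least
  three colors remain for each rim edge and the rim can be colored greedily in a way that is
  compatible with both colorings of `T`. The rim is first brought to this coloring by the first
  point, and then the exchange takes place on `T` alone.

Exchanges make `f` agree with `g` on `T`, and the first point finishes the transformation.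
-/


open SimpleGraph Set

namespace EdgeTrans

universe u v

variable {V : Type*} {W : Type*}

/-- The degree of a vertex. -/
noncomputable def deg (G : SimpleGraph V) (x : V) : ℕ :=
  (G.neighborSet x).ncard

/-- The maximum degree `Δ(G)`. -/
noncomputable def maxDeg (G : SimpleGraph V) : ℕ :=
  ⨆ x, deg G x

/-- A proper `t`-edge-coloring of `G`, using the colors `1, …, t`. -/
def IsProperEdgeColoring (G : SimpleGraph V) (t : ℕ) (f : Sym2 V → ℕ) : Prop :=
  (∀ e ∈ G.edgeSet, f e ∈ Finset.Icc 1 t) ∧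
  ∀ e₁ ∈ G.edgeSet, ∀ e₂ ∈ G.edgeSet, e₁ ≠ e₂ → (∃ x, x ∈ e₁ ∧ x ∈ e₂) → f e₁ ≠ f e₂

/-- The color class `M(f, j)`: the set of edges of `G` colored `j` by `f`. -/
def colorClass (G : SimpleGraph V) (f : Sym2 V → ℕ) (j : ℕ) : Set (Sym2 V) :=
  {e | e ∈ G.edgeSet ∧ f e = j}

/-- `f` and `g` differ by at most `n` color classes. -/
def DifferAtMost (G : SimpleGraph V) (n : ℕ) (f g : Sym2 V → ℕ) : Prop :=
  {j : ℕ | colorClass G f j ≠ colorClass G g j}.ncard ≤ n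

/-- `f` and `g` are `n`-equivalent proper `t`-edge-colorings: one can be transformed into the
other by a sequence of proper `t`-edge-colorings in which consecutive colorings differ by at
most `n` color classes. -/
def NEquiv (G : SimpleGraph V) (t n : ℕ) (f g : Sym2 V → ℕ) : Prop :=
  ∃ (k : ℕ) (F : ℕ → Sym2 V → ℕ), 1 ≤ k ∧ F 0 = f ∧ F k = g ∧
    (∀ i ≤ k, IsProperEdgeColoring G t (F i)) ∧
    ∀ i < k, DifferAtMost G n (F i) (F (i + 1))

/-- The chromatic index `χ'(G)`. -/
noncomputable def chromIdx (G : SimpleGraph V) : ℕ :=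
  sInf {t | ∃ f, IsProperEdgeColoring G t f}

/-- The edge chromatic transformation index `χ'_trans(G)`: the minimum `n ≥ 2` such that any
two proper `χ'(G)`-edge-colorings of `G` are `n`-equivalent. -/
noncomputable def transIdx (G : SimpleGraph V) : ℕ :=
  sInf {n | 2 ≤ n ∧ ∀ f g, IsProperEdgeColoring G (chromIdx G) f →
      IsProperEdgeColoring G (chromIdx G) g → NEquiv G (chromIdx G) n f g}

/-- `v` is a cutvertex of `G`: some two other vertices are connected in `G`, but every walk
between them passes through `v`. -/
def IsCutVertex (G : SimpleGraph V) (x : V) : Prop :=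
  ∃ a b : V, a ≠ x ∧ b ≠ x ∧ G.Reachable a b ∧ ∀ p : G.Walk a b, x ∈ p.support

/-- A block of `G`: a maximal connected subgraph without a cutvertex of the subgraph. -/
def IsBlock (G : SimpleGraph V) (B : G.Subgraph) : Prop :=
  B.coe.Connected ∧ (∀ x, ¬ IsCutVertex B.coe x) ∧
    ∀ B' : G.Subgraph, B ≤ B' → B'.coe.Connected →
      (∀ x, ¬ IsCutVertex B'.coe x) → B' = B

/-- Membership in the class `𝒜(q)`: every subgraph `H` of `G` with `Δ(H) ≤ q` has a proper
`q`-edge-coloring. -/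
def MemA (q : ℕ) (G : SimpleGraph V) : Prop :=
  ∀ H : SimpleGraph V, H ≤ G → maxDeg H ≤ q → ∃ f, IsProperEdgeColoring H q f

/-- `G` is `k`-degenerate: every (nonempty) subgraph of `G` contains a vertex of degree
at most `k` in the subgraph. -/
def Degenerate (k : ℕ) (G : SimpleGraph V) : Prop :=
  ∀ H : G.Subgraph, H.verts.Nonempty → ∃ x ∈ H.verts, (H.neighborSet x).ncard ≤ k

/-- `G` has `H` as a minor (via branch sets). -/
def HasMinor (G : SimpleGraph V) (H : SimpleGraph W) : Prop :=
  ∃ F : W → Set V,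
    (∀ w, (G.induce (F w)).Connected) ∧
    (∀ w₁ w₂, w₁ ≠ w₂ → Disjoint (F w₁) (F w₂)) ∧
    (∀ w₁ w₂, H.Adj w₁ w₂ → ∃ v₁ ∈ F w₁, ∃ v₂ ∈ F w₂, G.Adj v₁ v₂)

/-- Planarity, via Wagner's characterization: no `K₅` minor and no `K₃,₃` minor. -/
def Planar (G : SimpleGraph V) : Prop :=
  ¬ HasMinor G (completeGraph (Fin 5)) ∧
  ¬ HasMinor G (completeBipartiteGraph (Fin 3) (Fin 3))

/-- Series-parallel: no `K₄` minor. -/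
def SeriesParallel (G : SimpleGraph V) : Prop :=
  ¬ HasMinor G (completeGraph (Fin 4))

/-- `G` is chordless: in every cycle, any two nonconsecutive vertices are non-adjacent,
i.e. every edge of `G` joining two vertices of a cycle is an edge of the cycle. -/
def Chordless (G : SimpleGraph V) : Prop :=
  ∀ (x : V) (c : G.Walk x x), c.IsCycle →
    ∀ a ∈ c.support, ∀ b ∈ c.support, G.Adj a b → s(a, b) ∈ c.edges

/-- The wheel graph with hub `none` and cycle `ZMod n`. -/
def wheelGraph (n : ℕ) : SimpleGraph (Option (ZMod n)) :=
  SimpleGraph.fromRel (fun a b =>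
    a = none ∨ ∃ i : ZMod n, a = some i ∧ b = some (i + 1))

/-- `G` is a wheel graph. -/
def IsWheel (G : SimpleGraph V) : Prop :=
  ∃ n : ℕ, 3 ≤ n ∧ Nonempty (G ≃g wheelGraph n)

/-- `G` is a Halin graph: `G` is planar and is the edge-disjoint union of a spanning tree `T`
on at least four vertices having no vertex of degree two, and a cycle through exactly the
leaves of `T`. -/
def IsHalin (G : SimpleGraph V) : Prop :=
  Planar G ∧ 4 ≤ Nat.card V ∧
  ∃ T : SimpleGraph V, T ≤ G ∧ T.IsTree ∧ (∀ x : V, deg T x ≠ 2) ∧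
    ∃ (x₀ : V) (c : G.Walk x₀ x₀), c.IsCycle ∧
      (∀ e : Sym2 V, e ∈ c.edges ↔ e ∈ G.edgeSet \ T.edgeSet) ∧
      (∀ u : V, u ∈ c.support ↔ deg T u = 1)

/-- The subgraph `G(f,g,t)`: the (spanning) subgraph of `G` with edge set
`M(f,t) △ M(g,t)`. -/
def diffGraph (G : SimpleGraph V) (t : ℕ) (f g : Sym2 V → ℕ) : SimpleGraph V :=
  SimpleGraph.fromEdgeSet (symmDiff (colorClass G f t) (colorClass G g t))

/-- The walk `p` (a path or a cycle) is an entire connected component of its ambient graph: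
every edge incident with a vertex of `p` is an edge of `p`. -/
def IsComponentWalk {G : SimpleGraph V} {u x : V} (p : G.Walk u x) : Prop :=
  ∀ a ∈ p.support, ∀ b, G.Adj a b → s(a, b) ∈ p.edges

/-- The color `i` is missing at `x` under `f`. -/
def MissingAt (G : SimpleGraph V) (f : Sym2 V → ℕ) (i : ℕ) (x : V) : Prop :=
  ∀ e ∈ G.edgeSet, x ∈ e → f e ≠ i

/-- The path `p` is alternately colored with colors `a` and `b` under `f`
(an `(a,b)`-colored path). -/
def AltColored (f : Sym2 V → ℕ) (a b : ℕ) {G : SimpleGraph V} {u x : V}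
    (p : G.Walk u x) : Prop :=
  (∀ i : Fin p.edges.length, f (p.edges.get i) = if Even i.1 then a else b) ∨
  (∀ i : Fin p.edges.length, f (p.edges.get i) = if Even i.1 then b else a)

/-- The path `p` is `t`-alternating: of any two consecutive edges, one is colored `t`. -/
def AltPath (f : Sym2 V → ℕ) (t : ℕ) {G : SimpleGraph V} {u x : V}
    (p : G.Walk u x) : Prop :=
  ∀ (i : ℕ) (h : i + 1 < p.edges.length),
    f (p.edges.get ⟨i, Nat.lt_of_succ_lt h⟩) = t ∨ f (p.edges.get ⟨i + 1, h⟩) = t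

/-- The cycle `c` is `t`-alternating: of any two (cyclically) consecutive edges, one is
colored `t`. -/
def IsAltCycle (f : Sym2 V → ℕ) (t : ℕ) {G : SimpleGraph V} {u : V}
    (c : G.Walk u u) : Prop :=
  ∀ i : Fin c.edges.length,
    f (c.edges.get i) = t ∨
    f (c.edges.get ⟨(i.1 + 1) % c.edges.length, Nat.mod_lt _ i.pos⟩) = t

/-- `G` is 2-connected. -/
def TwoConnected (G : SimpleGraph V) : Prop :=
  G.Connected ∧ 3 ≤ Nat.card V ∧ ∀ x, ¬ IsCutVertex G x

/-- The union of the cycle `c` and the ears `P j` for `j < i`, as a subgraph. -/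
noncomputable def earPrefix {G : SimpleGraph V} {v₀ : V} (c : G.Walk v₀ v₀) {n : ℕ}
    {x y : Fin n → V} (P : ∀ i : Fin n, G.Walk (x i) (y i)) (i : ℕ) : G.Subgraph :=
  c.toSubgraph ⊔ ⨆ j : Fin n, ⨆ _ : (j : ℕ) < i, (P j).toSubgraph

/-- `c, P 0, …, P (n-1)` is a `t`-alternating ear decomposition with respect to the cycle `c`:
`c` is a `t`-alternating cycle, and each `P i` is a `(cᵢ, t)`-colored path (`cᵢ ≤ t - 1`) which
is an ear of `c ∪ P 0 ∪ … ∪ P i`, i.e. its endpoints lie in the previous part and its internal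
vertices have degree 2 in `c ∪ P 0 ∪ … ∪ P i`. -/
def IsEarDecomp (G : SimpleGraph V) (f : Sym2 V → ℕ) (t : ℕ) {v₀ : V} (c : G.Walk v₀ v₀)
    (n : ℕ) (x y : Fin n → V) (P : ∀ i : Fin n, G.Walk (x i) (y i)) : Prop :=
  c.IsCycle ∧ IsAltCycle f t c ∧
  ∀ i : Fin n,
    (P i).IsPath ∧ 1 ≤ (P i).length ∧
    (∃ ci : ℕ, ci ≤ t - 1 ∧ AltColored f ci t (P i)) ∧
    x i ∈ (earPrefix c P (i : ℕ)).verts ∧ y i ∈ (earPrefix c P (i : ℕ)).verts ∧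
    ∀ a ∈ (P i).support, a ≠ x i → a ≠ y i →
      ((earPrefix c P ((i : ℕ) + 1)).neighborSet a).ncard = 2

/-- The line graph of `G`. -/
def lineGr (G : SimpleGraph V) : SimpleGraph G.edgeSet :=
  SimpleGraph.fromRel (fun e₁ e₂ => ∃ x, x ∈ (e₁ : Sym2 V) ∧ x ∈ (e₂ : Sym2 V))

/-- The clique number (in `ℕ∞`). -/
noncomputable def cliqueNumE (G : SimpleGraph V) : ℕ∞ :=
  sSup {n : ℕ∞ | ∃ (m : ℕ) (s : Finset V), n = (m : ℕ∞) ∧ G.IsNClique m s}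

/-- `G` is a perfect graph: every induced subgraph has chromatic number equal to its
clique number. -/
def IsPerfect (G : SimpleGraph V) : Prop :=
  ∀ s : Set V, (G.induce s).chromaticNumber = cliqueNumE (G.induce s)

/-- A partition of the vertex set of `G` into `n` cliques, each of size `sz`. -/
def IsCliquePartition (G : SimpleGraph V) (n sz : ℕ) (P : Set (Set V)) : Prop :=
  P.ncard = n ∧ (∀ s ∈ P, G.IsClique s ∧ s.ncard = sz) ∧
  ⋃₀ P = Set.univ ∧ P.Pairwise fun s₁ s₂ => Disjoint s₁ s₂

/-- A proper vertex `n`-coloring of `G`, viewed as a partition of the vertex set into `n`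
independent sets (color classes). -/
def IsIndepPartition (G : SimpleGraph V) (n : ℕ) (P : Set (Set V)) : Prop :=
  P.ncard = n ∧ (∀ s ∈ P, ∀ a ∈ s, ∀ b ∈ s, ¬ G.Adj a b) ∧
  ⋃₀ P = Set.univ ∧ P.Pairwise fun s₁ s₂ => Disjoint s₁ s₂

/-- The graph `H(p,n)`: vertex classes `V_1, …, V_{2n}` of size `p` (indexed here by
`ZMod (2n)`), with two vertices adjacent iff they lie in the same class or in (cyclically)
consecutive classes. -/
def Hgraph (p n : ℕ) : SimpleGraph (ZMod (2 * n) × Fin p) :=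
  SimpleGraph.fromRel (fun a b => a.1 = b.1 ∨ a.1 + 1 = b.1)

/-- The clique partition `{C_1, …, C_n}` of `H(p,n)`, `C_i = V_{2i-1} ∪ V_{2i}`. -/
def Cpart (p n : ℕ) : Set (Set (ZMod (2 * n) × Fin p)) :=
  {s | ∃ i : Fin n, s = {x | x.1 = ((2 * (i : ℕ) : ℕ) : ZMod (2 * n)) ∨
      x.1 = ((2 * (i : ℕ) + 1 : ℕ) : ZMod (2 * n))}}

/-- The clique partition `{R_1, …, R_n}` of `H(p,n)`, `R_1 = V_{2n} ∪ V_1` and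
`R_i = V_{2i-2} ∪ V_{2i-1}`. -/
def Rpart (p n : ℕ) : Set (Set (ZMod (2 * n) × Fin p)) :=
  {s | ∃ i : Fin n, s = {x | x.1 = ((2 * (i : ℕ) : ℕ) : ZMod (2 * n)) - 1 ∨
      x.1 = ((2 * (i : ℕ) : ℕ) : ZMod (2 * n))}}

/-- A multigraph on vertices `α` with edges `β`: each edge has two distinct endpoints. -/
structure Multigraph (α : Type u) (β : Type v) where
  ends : β → Sym2 α
  not_isDiag : ∀ e, ¬ (ends e).IsDiag

namespace Multigraph

variable {α : Type u} {β : Type v}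

/-- A proper `t`-edge-coloring of a multigraph, with colors `1, …, t`. -/
def IsProper (G : Multigraph α β) (t : ℕ) (f : β → ℕ) : Prop :=
  (∀ e, f e ∈ Finset.Icc 1 t) ∧
  ∀ e₁ e₂ : β, e₁ ≠ e₂ → (∃ x, x ∈ G.ends e₁ ∧ x ∈ G.ends e₂) → f e₁ ≠ f e₂

/-- The color class `M(f,j)` of a multigraph edge coloring. -/
def mColorClass (f : β → ℕ) (j : ℕ) : Set β := {e | f e = j}

/-- `f` and `g` differ by at most `n` color classes. -/
def MDifferAtMost (n : ℕ) (f g : β → ℕ) : Prop :=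
  {j : ℕ | mColorClass f j ≠ mColorClass g j}.ncard ≤ n

/-- `n`-equivalence of proper `t`-edge-colorings of a multigraph. -/
def MNEquiv (G : Multigraph α β) (t n : ℕ) (f g : β → ℕ) : Prop :=
  ∃ (k : ℕ) (F : ℕ → β → ℕ), 1 ≤ k ∧ F 0 = f ∧ F k = g ∧
    (∀ i ≤ k, G.IsProper t (F i)) ∧ ∀ i < k, MDifferAtMost n (F i) (F (i + 1))

/-- The chromatic index of a multigraph. -/
noncomputable def mChromIdx (G : Multigraph α β) : ℕ :=
  sInf {t | ∃ f, G.IsProper t f}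

/-- The edge chromatic transformation index of a multigraph. -/
noncomputable def mTransIdx (G : Multigraph α β) : ℕ :=
  sInf {n | 2 ≤ n ∧ ∀ f g, G.IsProper G.mChromIdx f → G.IsProper G.mChromIdx g →
      G.MNEquiv G.mChromIdx n f g}

/-- The degree of a vertex in a multigraph. -/
noncomputable def mDeg (G : Multigraph α β) (x : α) : ℕ := {e | x ∈ G.ends e}.ncard

/-- The underlying simple graph of a multigraph. -/
def toSimple (G : Multigraph α β) : SimpleGraph α :=
  SimpleGraph.fromEdgeSet (Set.range G.ends)

end Multigraph



/-! ### Rooting a tree -/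

/-- A tree can be rooted at any vertex `r`: there are a parent map `p` (with `p r = r`) and a
depth function `d` such that the edges of the tree are exactly the edges from a non-root vertex
to its parent. -/
lemma exists_parent {T : SimpleGraph V} (hT : T.IsTree) (r : V) :
    ∃ (p : V → V) (d : V → ℕ), p r = r ∧
      (∀ x, x ≠ r → T.Adj x (p x) ∧ d (p x) + 1 = d x) ∧
      ∀ x y, T.Adj x y → (x ≠ r ∧ p x = y) ∨ (y ≠ r ∧ p y = x) := by
  classical
  have hc : T.Connected := hT.1
  choose P hP using fun x => hc.exists_walk_length_eq_dist r x
  have hPp : ∀ x, (P x).IsPath := fun x => (P x).isPath_of_length_eq_dist (hP x)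
  have key : ∀ x y, T.Adj x y → T.dist r y = T.dist r x + 1 → y ≠ r ∧ (P y).penultimate = x := by
    intro x y hxy hd
    refine ⟨?_, ?_⟩
    · rintro rfl
      simp at hd
    · have h1 : ((P x).concat hxy).IsPath := by
        apply Walk.isPath_of_length_eq_dist
        rw [Walk.length_concat, hP, hd]
      have h2 : P y = (P x).concat hxy := (hT.existsUnique_path r y).unique (hPp y) h1
      rw [h2, Walk.penultimate_concat]
  refine ⟨fun x => (P x).penultimate, fun x => T.dist r x, ?_, ?_, ?_⟩
  · have h0 : (P r).length = 0 := by rw [hP]; simp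
    simp [Walk.penultimate, h0]
  · intro x hx
    have hn : ¬ (P x).Nil := fun h => hx h.eq.symm
    have hadj := (P x).adj_penultimate hn
    refine ⟨hadj.symm, ?_⟩
    have h1 : T.dist r (P x).penultimate ≤ (P x).dropLast.length := dist_le _
    have h2 : (P x).dropLast.length + 1 = (P x).length := Walk.length_dropLast_add_one hn
    rcases hT.dist_eq_dist_add_one_of_adj r hadj with h | h
    · have := hP x
      change T.dist r (P x).penultimate + 1 = T.dist r x
      omega
    · exact h.symm
  · intro x y hxy
    rcases hT.dist_eq_dist_add_one_of_adj r hxy with h | h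
    · exact Or.inl (key y x hxy.symm h)
    · exact Or.inr (key x y hxy h)

/-! ### Recoloring the edges of a tree -/

/-- A vertex `y` from which `v` is reached by iterating the parent map, but which is no deeper
than `v`, is `v` itself. -/
lemma eq_of_iterate_parent {p : V → V} {d : V → ℕ} {r v : V} (hr : p r = r)
    (hd : ∀ x, x ≠ r → d (p x) + 1 = d x) {n : ℕ} {y : V} (h : p^[n] y = v) (hy : d y ≤ d v) :
    y = v := by
  have hle : ∀ (m : ℕ) (z : V), d (p^[m] z) ≤ d z := by
    intro m
    induction m with
    | zero => intro z; simp
    | succ m ih =>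
      intro z
      rw [Function.iterate_succ_apply]
      by_cases hz : z = r
      · subst hz
        rw [hr]
        exact ih z
      · have h1 := ih (p z)
        have h2 := hd z hz
        omega
  cases n with
  | zero => simpa using h
  | succ n =>
    by_cases hyr : y = r
    · subst hyr
      rw [Function.iterate_fixed hr] at h
      exact h
    · rw [Function.iterate_succ_apply] at h
      have h1 := hle n (p y)
      have h2 := hd y hyr
      rw [h] at h1
      omega

/-- Let `f` and `g` be proper edge-colorings of a rooted tree that agree on the parent edges of
all vertices of `S`, where `S` is an initial segment for the depth order, and let `w` be a vertex
of least depth outside `S`. Exchanging in `f` the two colors that `f` and `g` give to the parent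
edge of `w`, on all edges below the parent of `w`, gives a proper coloring that agrees with `g`
on `S ∪ {w}`. -/
lemma tree_swap {T : SimpleGraph V} {t : ℕ} {r : V} {p : V → V} {d : V → ℕ} (hr : p r = r)
    (hp : ∀ x, x ≠ r → T.Adj x (p x) ∧ d (p x) + 1 = d x)
    (hTe : ∀ x y, T.Adj x y → (x ≠ r ∧ p x = y) ∨ (y ≠ r ∧ p y = x))
    {f g : Sym2 V → ℕ} (hf : IsProperEdgeColoring T t f) (hg : IsProperEdgeColoring T t g)
    {S : Set V} {w : V} (hwS : w ∉ S) (hwr : w ≠ r)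
    (hlow : ∀ x, d x < d w → x ∈ S) (hhigh : ∀ x ∈ S, d x ≤ d w)
    (hS : ∀ x ∈ S, x ≠ r → f s(x, p x) = g s(x, p x)) :
    ∃ f' : Sym2 V → ℕ, IsProperEdgeColoring T t f' ∧
      (∃ a ∈ Finset.Icc 1 t, ∃ b ∈ Finset.Icc 1 t,
        ∀ e, f' e = f e ∨ f' e = Equiv.swap a b (f e)) ∧
      ∀ x ∈ insert w S, x ≠ r → f' s(x, p x) = g s(x, p x) := by
  classical
  have hdd : ∀ x, x ≠ r → d (p x) + 1 = d x := fun x hx => (hp x hx).2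
  have hmem : ∀ x, x ≠ r → s(x, p x) ∈ T.edgeSet := fun x hx => (hp x hx).1
  have hinj : ∀ x y, x ≠ r → y ≠ r → s(x, p x) = s(y, p y) → x = y := by
    intro x y hx hy h
    rcases Sym2.eq_iff.1 h with h | h
    · exact h.1
    · have h1 := hdd x hx
      have h2 := hdd y hy
      rw [h.2] at h1
      rw [← h.1] at h2
      omega
  have hne : ∀ x y, x ≠ r → y ≠ r → x ≠ y → s(x, p x) ≠ s(y, p y) :=
    fun x y hx hy hxy h => hxy (hinj x y hx hy h)
  set v := p w with hv
  set a := f s(w, p w) with ha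
  set b := g s(w, p w) with hb
  let D : Set V := {x | x ≠ r ∧ ∃ n, p^[n] (p x) = v}
  let f' : Sym2 V → ℕ := fun e =>
    if ∃ x ∈ D, e = s(x, p x) then Equiv.swap a b (f e) else f e
  have hf'D : ∀ x ∈ D, f' s(x, p x) = Equiv.swap a b (f s(x, p x)) :=
    fun x hx => if_pos ⟨x, hx, rfl⟩
  have hf'N : ∀ x, x ≠ r → x ∉ D → f' s(x, p x) = f s(x, p x) := by
    intro x hxr hx
    apply if_neg
    rintro ⟨y, hy, h⟩
    exact hx (hinj x y hxr hy.1 h ▸ hy)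
  have haI : a ∈ Finset.Icc 1 t := hf.1 _ (hmem w hwr)
  have hbI : b ∈ Finset.Icc 1 t := hg.1 _ (hmem w hwr)
  have hor : ∀ e, f' e = f e ∨ f' e = Equiv.swap a b (f e) := by
    intro e
    by_cases h : ∃ x ∈ D, e = s(x, p x)
    · exact Or.inr (if_pos h)
    · exact Or.inl (if_neg h)
  -- A parent edge and one of its child edges receive distinct colors.
  have hpc : ∀ x y, x ≠ r → y ≠ r → p y = x → f' s(x, p x) ≠ f' s(y, p y) := by
    intro x y hx hy hyx
    have hxy : x ≠ y := by
      rintro rfl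
      exact (hp x hx).1.ne hyx.symm
    have hfne : f s(x, p x) ≠ f s(y, p y) :=
      hf.2 _ (hmem x hx) _ (hmem y hy) (hne x y hx hy hxy) ⟨x, by simp, by simp [hyx]⟩
    by_cases hxD : x ∈ D
    · have hyD : y ∈ D := by
        obtain ⟨_, n, hn⟩ := hxD
        exact ⟨hy, n + 1, by rw [Function.iterate_succ_apply, hyx]; exact hn⟩
      rw [hf'D x hxD, hf'D y hyD]
      exact fun h => hfne ((Equiv.swap a b).injective h)
    · rw [hf'N x hx hxD]
      by_cases hyD : y ∈ D
      · rw [hf'D y hyD]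
        have hxv : x = v := by
          obtain ⟨_, n, hn⟩ := hyD
          rw [hyx] at hn
          cases n with
          | zero => exact hn
          | succ n => exact absurd ⟨hx, n, by simpa using hn⟩ hxD
        -- The edge above `v` is already correctly colored, so it has neither color `a` nor `b`.
        have hxw : x ≠ w := by
          rintro rfl
          exact (hp x hx).1.ne hxv
        have hxS : x ∈ S := hlow x (by have := hdd w hwr; rw [hxv, hv]; omega)
        have hxa : f s(x, p x) ≠ a :=
          hf.2 _ (hmem x hx) _ (hmem w hwr) (hne x w hx hwr hxw)
            ⟨x, by simp, by rw [hxv, hv]; simp⟩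
        have hxb : f s(x, p x) ≠ b := by
          rw [hS x hxS hx]
          exact hg.2 _ (hmem x hx) _ (hmem w hwr) (hne x w hx hwr hxw)
            ⟨x, by simp, by rw [hxv, hv]; simp⟩
        intro h
        apply hfne
        apply (Equiv.swap a b).injective
        rw [← h, Equiv.swap_apply_of_ne_of_ne hxa hxb]
      · rwa [hf'N y hy hyD]
  have hsib : ∀ x y, x ≠ r → y ≠ r → x ≠ y → p x = p y → f' s(x, p x) ≠ f' s(y, p y) := by
    intro x y hx hy hxy hpp
    have hfne : f s(x, p x) ≠ f s(y, p y) :=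
      hf.2 _ (hmem x hx) _ (hmem y hy) (hne x y hx hy hxy) ⟨p x, by simp, by simp [hpp]⟩
    by_cases hxD : x ∈ D
    · have hyD : y ∈ D := ⟨hy, by rw [← hpp]; exact hxD.2⟩
      rw [hf'D x hxD, hf'D y hyD]
      exact fun h => hfne ((Equiv.swap a b).injective h)
    · have hyD : y ∉ D := fun h => hxD ⟨hx, by rw [hpp]; exact h.2⟩
      rwa [hf'N x hx hxD, hf'N y hy hyD]
  have hform : ∀ e ∈ T.edgeSet, ∃ x, x ≠ r ∧ e = s(x, p x) := by
    intro e
    induction e with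
    | _ x y =>
      intro he
      rcases hTe x y he with ⟨h1, h2⟩ | ⟨h1, h2⟩
      · exact ⟨x, h1, by rw [h2]⟩
      · exact ⟨y, h1, by rw [h2, Sym2.eq_swap]⟩
  have hswI : ∀ c ∈ Finset.Icc 1 t, Equiv.swap a b c ∈ Finset.Icc 1 t := by
    intro c hc
    rw [Equiv.swap_apply_def]
    split_ifs
    exacts [hbI, haI, hc]
  refine ⟨f', ⟨?_, ?_⟩, ⟨a, haI, b, hbI, hor⟩, ?_⟩
  · intro e he
    rcases hor e with h | h
    · rw [h]; exact hf.1 e he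
    · rw [h]; exact hswI _ (hf.1 e he)
  · intro e₁ he₁ e₂ he₂ hne' hsh
    obtain ⟨x, hx, rfl⟩ := hform e₁ he₁
    obtain ⟨y, hy, rfl⟩ := hform e₂ he₂
    have hxy : x ≠ y := by rintro rfl; exact hne' rfl
    obtain ⟨z, hz1, hz2⟩ := hsh
    rcases Sym2.mem_iff.1 hz1 with h1 | h1 <;> rcases Sym2.mem_iff.1 hz2 with h2 | h2
    · exact absurd (h1.symm.trans h2) hxy
    · exact hpc x y hx hy (h2.symm.trans h1)
    · exact (hpc y x hy hx (h1.symm.trans h2)).symm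
    · exact hsib x y hx hy hxy (h1.symm.trans h2)
  · intro x hx hxr
    rcases hx with rfl | hx
    · have hwD : x ∈ D := ⟨hxr, 0, rfl⟩
      rw [hf'D x hwD, ← ha, Equiv.swap_apply_left]
    · by_cases hxD : x ∈ D
      · rw [hf'D x hxD]
        obtain ⟨_, n, hn⟩ := hxD
        -- A descendant of `v` in `S` is a child of `v`, so its edge avoids colors `a` and `b`.
        have hxv : p x = v := by
          apply eq_of_iterate_parent hr hdd hn
          have h1 := hhigh x hx
          have h2 := hdd x hxr
          have h3 := hdd w hwr
          rw [hv]
          omega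
        have hxw : x ≠ w := by rintro rfl; exact hwS hx
        have hxa : f s(x, p x) ≠ a :=
          hf.2 _ (hmem x hxr) _ (hmem w hwr) (hne x w hxr hwr hxw)
            ⟨v, by simp [hxv], by simp [hv]⟩
        have hxb : f s(x, p x) ≠ b := by
          rw [hS x hx hxr]
          exact hg.2 _ (hmem x hxr) _ (hmem w hwr) (hne x w hxr hwr hxw)
            ⟨v, by simp [hxv], by simp [hv]⟩
        rw [Equiv.swap_apply_of_ne_of_ne hxa hxb, hS x hx hxr]
      · rw [hf'N x hxr hxD, hS x hx hxr]

/-! ### Recoloring the edges off the tree -/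

/-- One step of a transformation: a change of at most five color classes between proper
`t`-edge-colorings. -/
def Step (G : SimpleGraph V) (t : ℕ) (f g : Sym2 V → ℕ) : Prop :=
  IsProperEdgeColoring G t f ∧ IsProperEdgeColoring G t g ∧ DifferAtMost G 5 f g

/-- Each edge of `G` outside the subgraph `T` meets at most two other edges outside `T` and at
most two edges of `T`. -/
def SparseRim (G T : SimpleGraph V) : Prop :=
  ∀ e ∈ G.edgeSet, e ∉ T.edgeSet → ∃ k₁ k₂ t₁ t₂ : Sym2 V,
    ∀ k ∈ G.edgeSet, k ≠ e → (∃ x, x ∈ e ∧ x ∈ k) →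
      (k ∉ T.edgeSet ∧ (k = k₁ ∨ k = k₂)) ∨ (k ∈ T.edgeSet ∧ (k = t₁ ∨ k = t₂))

lemma differAtMost_of_forall {G : SimpleGraph V} {f g : Sym2 V → ℕ} (J : Finset ℕ)
    (hJ : J.card ≤ 5) (h : ∀ e ∈ G.edgeSet, f e ≠ g e → f e ∈ J ∧ g e ∈ J) :
    DifferAtMost G 5 f g := by
  have hsub : {j : ℕ | colorClass G f j ≠ colorClass G g j} ⊆ (J : Set ℕ) := by
    intro j hj
    by_contra hjJ
    apply hj
    ext e
    constructor
    · rintro ⟨he, rfl⟩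
      refine ⟨he, ?_⟩
      by_contra hne
      exact hjJ (h e he (Ne.symm hne)).1
    · rintro ⟨he, rfl⟩
      refine ⟨he, ?_⟩
      by_contra hne
      exact hjJ (h e he hne).2
  calc _ ≤ (J : Set ℕ).ncard := Set.ncard_le_ncard hsub J.finite_toSet
    _ = J.card := Set.ncard_coe_finset J
    _ ≤ 5 := hJ

lemma exists_color {t : ℕ} (ht : 6 ≤ t) (J : Finset ℕ) (hJ : J.card ≤ 5) :
    ∃ c ∈ Finset.Icc 1 t, c ∉ J := by
  apply Finset.exists_mem_notMem_of_card_lt_card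
  rw [Nat.card_Icc]
  omega

lemma card_insert_le_of_le {J : Finset ℕ} {n : ℕ} (a : ℕ) (h : J.card ≤ n) :
    (insert a J).card ≤ n + 1 :=
  (Finset.card_insert_le a J).trans (by omega)

/-- The edge `e` off the tree can be given its color under `g`, only spoiling edges
that were not colored as under `g` anyway: the at most two neighbors of `e` having that color
are recolored first. -/
lemma rim_fix_one {G T : SimpleGraph V} (hGT : SparseRim G T) {t : ℕ} (ht : 6 ≤ t)
    {f g : Sym2 V → ℕ} (hf : IsProperEdgeColoring G t f) (hg : IsProperEdgeColoring G t g)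
    (hfg : ∀ e ∈ T.edgeSet, f e = g e) {e : Sym2 V} (he : e ∈ G.edgeSet) (heT : e ∉ T.edgeSet) :
    ∃ f', Step G t f f' ∧ f' e = g e ∧ ∀ k ∈ G.edgeSet, f k = g k → f' k = g k := by
  classical
  let B : Sym2 V → Prop :=
    fun h => h ∈ G.edgeSet ∧ h ≠ e ∧ (∃ x, x ∈ e ∧ x ∈ h) ∧ f h = g e
  have hBg : ∀ h, B h → f h ≠ g h := by
    rintro h ⟨h1, h2, h3, h4⟩
    rw [h4]
    exact hg.2 e he h h1 h2.symm h3
  have hBT : ∀ h, B h → h ∉ T.edgeSet := fun h hB hT => hBg h hB (hfg h hT)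
  -- A replacement color for each edge: four neighbors and its own color are avoided.
  have hφ : ∀ h, ∃ c, B h → c ∈ Finset.Icc 1 t ∧ c ≠ f h ∧
      ∀ k ∈ G.edgeSet, k ≠ h → (∃ x, x ∈ h ∧ x ∈ k) → c ≠ f k := by
    intro h
    by_cases hB : B h
    · obtain ⟨k₁, k₂, t₁, t₂, hk⟩ := hGT h hB.1 (hBT h hB)
      obtain ⟨c, hc, hcJ⟩ := exists_color ht {f h, f k₁, f k₂, f t₁, f t₂} Finset.card_le_five
      simp only [Finset.mem_insert, Finset.mem_singleton, not_or] at hcJ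
      refine ⟨c, fun _ => ⟨hc, hcJ.1, ?_⟩⟩
      intro k hkG hkh hx
      rcases hk k hkG hkh hx with ⟨_, rfl | rfl⟩ | ⟨_, rfl | rfl⟩ <;> tauto
    · exact ⟨0, fun h => absurd h hB⟩
  choose φ hφ using hφ
  let f' : Sym2 V → ℕ := fun h => if h = e then g e else if B h then φ h else f h
  have f'e : f' e = g e := if_pos rfl
  have f'B : ∀ h, B h → f' h = φ h := fun h hB => by
    simp only [f', if_neg hB.2.1, if_pos hB]
  have f'N : ∀ h, h ≠ e → ¬ B h → f' h = f h := fun h hne hB => by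
    simp only [f', if_neg hne, if_neg hB]
  have heh : ∀ h ∈ G.edgeSet, h ≠ e → (∃ x, x ∈ e ∧ x ∈ h) → f' e ≠ f' h := by
    intro h hh hne hx
    rw [f'e]
    by_cases hB : B h
    · rw [f'B h hB, ← hB.2.2.2]
      exact (hφ h hB).2.1.symm
    · rw [f'N h hne hB]
      exact fun h' => hB ⟨hh, hne, hx, h'.symm⟩
  have hBk : ∀ h k, B h → k ∈ G.edgeSet → k ≠ e → k ≠ h → (∃ x, x ∈ h ∧ x ∈ k) →
      f' h ≠ f' k := by
    intro h k hB hk hke hkh hx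
    have hkB : ¬ B k := fun hkB =>
      hf.2 h hB.1 k hk hkh.symm hx (hB.2.2.2.trans hkB.2.2.2.symm)
    rw [f'B h hB, f'N k hke hkB]
    exact (hφ h hB).2.2 k hk hkh hx
  refine ⟨f', ⟨hf, ⟨?_, ?_⟩, ?_⟩, f'e, ?_⟩
  · intro h hh
    by_cases hne : h = e
    · subst hne
      rw [f'e]
      exact hg.1 h hh
    · by_cases hB : B h
      · rw [f'B h hB]
        exact (hφ h hB).1
      · rw [f'N h hne hB]
        exact hf.1 h hh
  · intro h hh k hk hhk hx
    have hx' : ∃ x, x ∈ k ∧ x ∈ h := by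
      obtain ⟨x, h1, h2⟩ := hx
      exact ⟨x, h2, h1⟩
    by_cases h1 : h = e
    · subst h1
      exact heh k hk hhk.symm hx
    by_cases h2 : k = e
    · subst h2
      exact (heh h hh hhk hx').symm
    by_cases h3 : B h
    · exact hBk h k h3 hk h2 hhk.symm hx
    by_cases h4 : B k
    · exact (hBk k h h4 hh h1 hhk hx').symm
    · rw [f'N h h1 h3, f'N k h2 h4]
      exact hf.2 h hh k hk hhk hx
  · obtain ⟨k₁, k₂, t₁, t₂, hk⟩ := hGT e he heT
    apply differAtMost_of_forall ({f e, g e, φ k₁, φ k₂} : Finset ℕ)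
    · exact Finset.card_le_four.trans (by norm_num)
    · intro h hh hne
      by_cases h1 : h = e
      · subst h1
        rw [f'e]
        simp
      by_cases h2 : B h
      · rw [f'B h h2, h2.2.2.2]
        rcases hk h hh h1 h2.2.2.1 with ⟨_, rfl | rfl⟩ | ⟨h3, _⟩
        · simp
        · simp
        · exact absurd h3 (hBT h h2)
      · exact absurd (f'N h h1 h2).symm hne
  · intro k hk hfk
    by_cases h1 : k = e
    · subst h1
      exact f'e
    · rw [f'N k h1 (fun hB => hBg k hB hfk), hfk]

/-- Two proper `t`-edge-colorings, `t ≥ 6`, that agree on the tree are joined by steps. -/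
lemma rim_reach [Finite V] {G T : SimpleGraph V} (hGT : SparseRim G T) {t : ℕ} (ht : 6 ≤ t)
    {g : Sym2 V → ℕ} (hg : IsProperEdgeColoring G t g) :
    ∀ (n : ℕ) (f : Sym2 V → ℕ), {e | e ∈ G.edgeSet ∧ f e ≠ g e}.ncard = n →
      IsProperEdgeColoring G t f → (∀ e ∈ T.edgeSet, f e = g e) → T ≤ G →
      Relation.ReflTransGen (Step G t) f g := by
  intro n
  induction n using Nat.strong_induction_on with
  | _ n ih =>
    intro f hn hf hfg hTG
    by_cases hall : ∀ e ∈ G.edgeSet, f e = g e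
    · refine Relation.ReflTransGen.single ⟨hf, hg, ?_⟩
      exact differAtMost_of_forall ∅ (by simp) fun e he hne => absurd (hall e he) hne
    · push Not at hall
      obtain ⟨e, he, hne⟩ := hall
      have heT : e ∉ T.edgeSet := fun h => hne (hfg e h)
      obtain ⟨f', hst, hf'e, hf'⟩ := rim_fix_one hGT ht hf hg hfg he heT
      have hlt : {e | e ∈ G.edgeSet ∧ f' e ≠ g e}.ncard < n := by
        rw [← hn]
        apply Set.ncard_lt_ncard _ (Set.toFinite _)
        refine ⟨fun k hk => ⟨hk.1, fun h => hk.2 (hf' k hk.1 h)⟩, fun hsub => ?_⟩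
        exact (hsub (show e ∈ {e | e ∈ G.edgeSet ∧ f e ≠ g e} from ⟨he, hne⟩)).2 hf'e
      exact (ih _ hlt f' rfl hst.2.1
        (fun k hk => hf' k (SimpleGraph.edgeSet_mono hTG hk) (hfg k hk)) hTG).head hst

/-- The edges off the tree can be properly colored so that each of them also avoids a prescribed
set of at most three colors. -/
lemma rim_greedy [Finite V] {G T : SimpleGraph V} (hGT : SparseRim G T) {t : ℕ} (ht : 6 ≤ t)
    (forb : Sym2 V → Finset ℕ) (hforb : ∀ e, (forb e).card ≤ 3) :
    ∃ h : Sym2 V → ℕ, (∀ e ∈ G.edgeSet, e ∉ T.edgeSet → h e ∈ Finset.Icc 1 t ∧ h e ∉ forb e) ∧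
      ∀ e ∈ G.edgeSet, e ∉ T.edgeSet → ∀ k ∈ G.edgeSet, k ∉ T.edgeSet → e ≠ k →
        (∃ x, x ∈ e ∧ x ∈ k) → h e ≠ h k := by
  classical
  have hmain : ∀ A : Finset (Sym2 V), (∀ e ∈ A, e ∈ G.edgeSet ∧ e ∉ T.edgeSet) →
      ∃ h : Sym2 V → ℕ, (∀ e ∈ A, h e ∈ Finset.Icc 1 t ∧ h e ∉ forb e) ∧
        ∀ e ∈ A, ∀ k ∈ A, e ≠ k → (∃ x, x ∈ e ∧ x ∈ k) → h e ≠ h k := by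
    intro A
    induction A using Finset.induction_on with
    | empty => intro _; exact ⟨fun _ => 0, by simp, by simp⟩
    | insert e A heA ih =>
      intro hA
      obtain ⟨h, h1, h2⟩ := ih fun k hk => hA k (Finset.mem_insert_of_mem hk)
      obtain ⟨he, heT⟩ := hA e (Finset.mem_insert_self _ _)
      obtain ⟨k₁, k₂, t₁, t₂, hk⟩ := hGT e he heT
      obtain ⟨c, hc, hcJ⟩ := exists_color ht (insert (h k₁) (insert (h k₂) (forb e)))
        (card_insert_le_of_le _ (card_insert_le_of_le _ (hforb e)))
      simp only [Finset.mem_insert, not_or] at hcJ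
      have hne : ∀ k ∈ A, k ≠ e := fun k hkA h => heA (h ▸ hkA)
      have hck : ∀ k ∈ A, (∃ x, x ∈ e ∧ x ∈ k) → c ≠ h k := by
        intro k hkA hx
        have hkG := hA k (Finset.mem_insert_of_mem hkA)
        rcases hk k hkG.1 (hne k hkA) hx with ⟨_, rfl | rfl⟩ | ⟨h3, _⟩
        · exact hcJ.1
        · exact hcJ.2.1
        · exact absurd h3 hkG.2
      refine ⟨Function.update h e c, ?_, ?_⟩
      · intro k hkA
        rcases Finset.mem_insert.1 hkA with rfl | hkA
        · rw [Function.update_self]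
          exact ⟨hc, hcJ.2.2⟩
        · rw [Function.update_of_ne (hne k hkA)]
          exact h1 k hkA
      · intro k hk' l hl' hkl hx
        rcases Finset.mem_insert.1 hk' with hke | hkA <;>
          rcases Finset.mem_insert.1 hl' with hle | hlA
        · exact absurd (hke.trans hle.symm) hkl
        · subst hke
          rw [Function.update_self, Function.update_of_ne (hne l hlA)]
          exact hck l hlA hx
        · subst hle
          rw [Function.update_self, Function.update_of_ne (hne k hkA)]
          obtain ⟨x, hx1, hx2⟩ := hx
          exact (hck k hkA ⟨x, hx2, hx1⟩).symm
        · rw [Function.update_of_ne (hne l hlA), Function.update_of_ne (hne k hkA)]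
          exact h2 k hkA l hlA hkl hx
  have := Fintype.ofFinite V
  obtain ⟨h, h1, h2⟩ := hmain (Finset.univ.filter fun e => e ∈ G.edgeSet ∧ e ∉ T.edgeSet)
    (by simp)
  refine ⟨h, fun e he heT => h1 e (by simp [he, heT]), fun e he heT k hk hkT =>
    h2 e (by simp [he, heT]) k (by simp [hk, hkT])⟩

/-! ### Transforming one coloring into another -/

/-- The colors of two edges before and after an exchange of two colors number at most three:
if both edges change color, then all four colors are among the two exchanged ones. -/
lemma card_forb_le {a b x y x' y' : ℕ} (hx : x' = x ∨ x' = Equiv.swap a b x)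
    (hy : y' = y ∨ y' = Equiv.swap a b y) : ({x, y, x', y'} : Finset ℕ).card ≤ 3 := by
  have hab : ∀ z z' : ℕ, z' = z ∨ z' = Equiv.swap a b z →
      z' = z ∨ (z = a ∧ z' = b) ∨ (z = b ∧ z' = a) := by
    intro z z' h
    rcases h with h | h
    · exact Or.inl h
    · rw [Equiv.swap_apply_def] at h
      split_ifs at h with h1 h2
      · exact Or.inr (Or.inl ⟨h1, h⟩)
      · exact Or.inr (Or.inr ⟨h2, h⟩)
      · exact Or.inl h
  have hle : ∀ p q r : ℕ, ({x, y, x', y'} : Finset ℕ) ⊆ {p, q, r} →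
      ({x, y, x', y'} : Finset ℕ).card ≤ 3 :=
    fun p q r h => (Finset.card_le_card h).trans Finset.card_le_three
  rcases hab x x' hx with h | h
  · subst h
    exact hle x' y y' (by intro z; simp only [Finset.mem_insert, Finset.mem_singleton]; tauto)
  rcases hab y y' hy with h' | h'
  · subst h'
    exact hle x x' y' (by intro z; simp only [Finset.mem_insert, Finset.mem_singleton]; tauto)
  · apply hle a b a
    intro z
    simp only [Finset.mem_insert, Finset.mem_singleton]
    rcases h with ⟨rfl, rfl⟩ | ⟨rfl, rfl⟩ <;> rcases h' with ⟨rfl, rfl⟩ | ⟨rfl, rfl⟩ <;> tauto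

/-- Exchanging two colors on some edges of the tree lifts to a sequence of steps of the whole
graph: the edges off the tree are first given a coloring compatible with the tree both before
and after the exchange. -/
lemma lift_swap [Finite V] {G T : SimpleGraph V} (hTG : T ≤ G) (hGT : SparseRim G T) {t : ℕ}
    (ht : 6 ≤ t) {f f₁ : Sym2 V → ℕ} (hf : IsProperEdgeColoring G t f)
    (hf₁ : IsProperEdgeColoring T t f₁) {a b : ℕ}
    (hor : ∀ e, f₁ e = f e ∨ f₁ e = Equiv.swap a b (f e)) :
    ∃ f', IsProperEdgeColoring G t f' ∧ Relation.ReflTransGen (Step G t) f f' ∧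
      ∀ e ∈ T.edgeSet, f' e = f₁ e := by
  classical
  have hTG' : ∀ e ∈ T.edgeSet, e ∈ G.edgeSet := fun e he => SimpleGraph.edgeSet_mono hTG he
  have hforb : ∀ e : Sym2 V, ∃ J : Finset ℕ, J.card ≤ 3 ∧ (e ∈ G.edgeSet → e ∉ T.edgeSet →
      ∀ k ∈ T.edgeSet, (∃ x, x ∈ e ∧ x ∈ k) → f k ∈ J ∧ f₁ k ∈ J) := by
    intro e
    by_cases he : e ∈ G.edgeSet ∧ e ∉ T.edgeSet
    · obtain ⟨k₁, k₂, t₁, t₂, hk⟩ := hGT e he.1 he.2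
      refine ⟨{f t₁, f t₂, f₁ t₁, f₁ t₂}, card_forb_le (hor t₁) (hor t₂), fun _ _ k hkT hx => ?_⟩
      rcases hk k (hTG' k hkT) (fun h => he.2 (h ▸ hkT)) hx with ⟨h, _⟩ | ⟨_, rfl | rfl⟩
      · exact absurd hkT h
      · simp
      · simp
    · exact ⟨∅, by simp, fun h1 h2 => absurd ⟨h1, h2⟩ he⟩
  choose forb hcard hforb using hforb
  obtain ⟨h, h1, h2⟩ := rim_greedy hGT ht forb hcard
  -- Any coloring `q` of the tree whose colors near the rim are forbidden to `h` combines with `h`.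
  have hcomb : ∀ q : Sym2 V → ℕ, IsProperEdgeColoring T t q →
      (∀ e ∈ G.edgeSet, e ∉ T.edgeSet → ∀ k ∈ T.edgeSet, (∃ x, x ∈ e ∧ x ∈ k) →
        q k ∈ forb e) →
      IsProperEdgeColoring G t (fun e => if e ∈ T.edgeSet then q e else h e) := by
    intro q hq hqf
    refine ⟨fun e he => ?_, fun e he k hk hek hx => ?_⟩
    · by_cases heT : e ∈ T.edgeSet
      · simpa only [if_pos heT] using hq.1 e heT
      · simpa only [if_neg heT] using (h1 e he heT).1
    · by_cases heT : e ∈ T.edgeSet <;> by_cases hkT : k ∈ T.edgeSet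
      · simpa only [if_pos heT, if_pos hkT] using hq.2 e heT k hkT hek hx
      · simp only [if_pos heT, if_neg hkT]
        obtain ⟨x, hx1, hx2⟩ := hx
        intro hc
        exact (h1 k hk hkT).2 (hc ▸ hqf k hk hkT e heT ⟨x, hx2, hx1⟩)
      · simp only [if_neg heT, if_pos hkT]
        intro hc
        exact (h1 e he heT).2 (hc ▸ hqf e he heT k hkT hx)
      · simpa only [if_neg heT, if_neg hkT] using h2 e he heT k hk hkT hek hx
  have hfT : IsProperEdgeColoring T t f :=
    ⟨fun e he => hf.1 e (hTG' e he), fun e he k hk => hf.2 e (hTG' e he) k (hTG' k hk)⟩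
  have hg0 := hcomb f hfT fun e he heT k hk hx => (hforb e he heT k hk hx).1
  have hg1 := hcomb f₁ hf₁ fun e he heT k hk hx => (hforb e he heT k hk hx).2
  refine ⟨_, hg1, (rim_reach hGT ht hg0 _ f rfl hf ?_ hTG).tail ⟨hg0, hg1, ?_⟩, ?_⟩
  · intro e he
    simp only [if_pos he]
  · apply differAtMost_of_forall {a, b} (Finset.card_le_two.trans (by norm_num))
    intro e he hne
    by_cases heT : e ∈ T.edgeSet
    · simp only [if_pos heT] at hne ⊢
      rcases hor e with h | h
      · exact absurd h.symm hne
      · rw [h] at hne ⊢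
        rw [Equiv.swap_apply_def] at hne ⊢
        split_ifs at hne ⊢ with h1 h2
        · simp [h1]
        · simp [h2]
        · exact absurd rfl hne
    · simp only [if_neg heT] at hne
      exact absurd rfl hne
  · intro e he
    simp only [if_pos he]

/-- If `T` is a spanning tree of `G` and the edges off `T` form a sparse rim, then any two proper
`t`-edge-colorings with `t ≥ 6` are joined by steps. -/
lemma reach_of_sparseRim [Finite V] {G T : SimpleGraph V} (hTG : T ≤ G) (hT : T.IsTree)
    (hGT : SparseRim G T) {t : ℕ} (ht : 6 ≤ t) {f g : Sym2 V → ℕ}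
    (hf : IsProperEdgeColoring G t f) (hg : IsProperEdgeColoring G t g) :
    Relation.ReflTransGen (Step G t) f g := by
  classical
  obtain ⟨r⟩ := hT.1.nonempty
  obtain ⟨p, d, hr, hp, hTe⟩ := exists_parent hT r
  have hTG' : ∀ e ∈ T.edgeSet, e ∈ G.edgeSet := fun e he => SimpleGraph.edgeSet_mono hTG he
  have hres : ∀ q, IsProperEdgeColoring G t q → IsProperEdgeColoring T t q := fun q hq =>
    ⟨fun e he => hq.1 e (hTG' e he), fun e he k hk => hq.2 e (hTG' e he) k (hTG' k hk)⟩
  have hmain : ∀ (n : ℕ) (S : Set V) (f : Sym2 V → ℕ), Sᶜ.ncard = n → r ∈ S →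
      (∀ x ∈ S, ∀ y, y ∉ S → d x ≤ d y) → IsProperEdgeColoring G t f →
      (∀ x ∈ S, x ≠ r → f s(x, p x) = g s(x, p x)) →
      Relation.ReflTransGen (Step G t) f g := by
    intro n
    induction n using Nat.strong_induction_on with
    | _ n ih =>
      intro S f hn hrS hS hf hfS
      rcases Sᶜ.eq_empty_or_nonempty with hemp | hne
      · have hall : ∀ x, x ∈ S := fun x => by
          by_contra hx
          exact (hemp ▸ hx : x ∈ (∅ : Set V))
        refine rim_reach hGT ht hg _ f rfl hf ?_ hTG
        intro e
        induction e with
        | _ x y =>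
          intro he
          rcases hTe x y he with ⟨h1, h2⟩ | ⟨h1, h2⟩
          · rw [← h2]
            exact hfS x (hall x) h1
          · rw [← h2, Sym2.eq_swap]
            exact hfS y (hall y) h1
      · obtain ⟨w, hwS, hwmin⟩ := Set.exists_min_image Sᶜ d (Set.toFinite _) hne
        have hwr : w ≠ r := by rintro rfl; exact hwS hrS
        obtain ⟨f₁, hf₁, ⟨a, _, b, _, hor⟩, hagree⟩ := tree_swap hr hp hTe (hres f hf)
          (hres g hg) hwS hwr
          (fun x hx => by
            by_contra hxS
            exact absurd (hwmin x hxS) (not_le.2 hx))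
          (fun x hx => hS x hx w hwS) hfS
        obtain ⟨f', hf', hreach, hf'T⟩ := lift_swap hTG hGT ht hf hf₁ hor
        refine hreach.trans (ih _ ?_ (insert w S) f' rfl (Set.mem_insert_of_mem _ hrS) ?_ hf' ?_)
        · rw [← hn]
          apply Set.ncard_lt_ncard _ (Set.toFinite _)
          refine ⟨fun x hx hxS => hx (Set.mem_insert_of_mem _ hxS), fun hsub => ?_⟩
          exact hsub hwS (Set.mem_insert _ _)
        · intro x hx y hy
          have hyS : y ∉ S := fun h => hy (Set.mem_insert_of_mem _ h)
          rcases hx with rfl | hx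
          · exact hwmin y hyS
          · exact hS x hx y hyS
        · intro x hx hxr
          rw [hf'T _ (hp x hxr).1]
          exact hagree x hx hxr
  by_cases hmin : ∀ y, d r ≤ d y
  · exact hmain _ {r} f rfl rfl (by rintro x rfl y _; exact hmin y) hf
      (by rintro x rfl h; exact absurd rfl h)
  · -- The root has least depth: descend along parents from a vertex of least depth.
    exfalso
    obtain ⟨y, -, hy⟩ := Set.exists_min_image Set.univ d (Set.toFinite _) ⟨r, trivial⟩
    by_cases hyr : y = r
    · subst hyr
      exact hmin fun z => hy z trivial
    · have h1 := (hp y hyr).2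
      have h2 := hy (p y) trivial
      omega

/-! ### Halin graphs -/

/-- Each vertex of the rim is on exactly one edge of the tree and, besides any given rim edge,
on one more rim edge. -/
lemma sparseRim_of_isHalin {G T : SimpleGraph V} {x₀ : V} {c : G.Walk x₀ x₀}
    (hc : c.IsCycle) (hce : ∀ e : Sym2 V, e ∈ c.edges ↔ e ∈ G.edgeSet \ T.edgeSet)
    (hcs : ∀ u : V, u ∈ c.support ↔ deg T u = 1) : SparseRim G T := by
  have hvert : ∀ u z : V, s(u, z) ∈ c.edges → ∃ k t : Sym2 V, ∀ l ∈ G.edgeSet,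
      l ≠ s(u, z) → u ∈ l → (l ∉ T.edgeSet ∧ l = k) ∨ (l ∈ T.edgeSet ∧ l = t) := by
    intro u z huz
    have hu : u ∈ c.support := c.fst_mem_support_of_mem_edges huz
    obtain ⟨y, hy⟩ := Set.ncard_eq_one.1 ((hcs u).1 hu)
    obtain ⟨p, q, -, hpq⟩ := Set.ncard_eq_two.1 (hc.ncard_neighborSet_toSubgraph_eq_two hu)
    have hmem : ∀ x, s(u, x) ∈ c.edges → x = p ∨ x = q := by
      intro x hx
      have : x ∈ c.toSubgraph.neighborSet u := by
        rw [SimpleGraph.Subgraph.mem_neighborSet, ← SimpleGraph.Subgraph.mem_edgeSet,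
          Walk.mem_edges_toSubgraph]
        exact hx
      rw [hpq] at this
      exact this
    have hkey : ∃ k, ∀ x, s(u, x) ∈ c.edges → x ≠ z → x = k := by
      rcases hmem z huz with rfl | rfl
      · exact ⟨q, fun x hx hne => (hmem x hx).resolve_left hne⟩
      · exact ⟨p, fun x hx hne => (hmem x hx).resolve_right hne⟩
    obtain ⟨k, hk⟩ := hkey
    refine ⟨s(u, k), s(u, y), fun l hl hne hul => ?_⟩
    obtain ⟨x, rfl⟩ := Sym2.mem_iff_exists.1 hul
    by_cases hlT : s(u, x) ∈ T.edgeSet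
    · right
      have : x ∈ T.neighborSet u := hlT
      rw [hy] at this
      exact ⟨hlT, by rw [Set.mem_singleton_iff.1 this]⟩
    · left
      refine ⟨hlT, ?_⟩
      rw [hk x ((hce _).2 ⟨hl, hlT⟩) (fun h => hne (by rw [h]))]
  intro e
  induction e with
  | _ u z =>
    intro he heT
    have huz : s(u, z) ∈ c.edges := (hce _).2 ⟨he, heT⟩
    obtain ⟨k₁, t₁, h₁⟩ := hvert u z huz
    obtain ⟨k₂, t₂, h₂⟩ := hvert z u (by rwa [Sym2.eq_swap])
    refine ⟨k₁, k₂, t₁, t₂, fun l hl hne hx => ?_⟩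
    obtain ⟨x, hx1, hx2⟩ := hx
    rcases Sym2.mem_iff.1 hx1 with rfl | rfl
    · rcases h₁ l hl hne hx2 with h | h <;> tauto
    · rcases h₂ l hl (by rwa [Sym2.eq_swap]) hx2 with h | h <;> tauto

lemma nEquiv_of_reach {G : SimpleGraph V} {t : ℕ} {f g : Sym2 V → ℕ}
    (hf : IsProperEdgeColoring G t f) (h : Relation.ReflTransGen (Step G t) f g) :
    NEquiv G t 5 f g := by
  induction h with
  | refl =>
    refine ⟨1, fun _ => f, le_rfl, rfl, rfl, fun _ _ => hf, fun _ _ => ?_⟩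
    exact differAtMost_of_forall ∅ (by simp) fun e _ hne => absurd rfl hne
  | @tail g h _ hgh ih =>
    obtain ⟨k, F, hk, h0, hk', hF, hd⟩ := ih
    refine ⟨k + 1, fun i => if i ≤ k then F i else h, by omega, by simp [h0], by simp, ?_, ?_⟩
    · intro i _
      by_cases hi : i ≤ k
      · simpa only [if_pos hi] using hF i hi
      · simpa only [if_neg hi] using hgh.2.1
    · intro i hi
      rcases Nat.lt_or_ge i k with hik | hik
      · simpa only [if_pos hik.le, if_pos (show i + 1 ≤ k by omega)] using hd i hik
      · obtain rfl : i = k := by omega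
        simp only [if_pos le_rfl, if_neg (show ¬ i + 1 ≤ i by omega), hk']
        exact hgh.2.2

/-- If `G` is a Halin graph, then `χ'_trans(G) ≤ 5`. -/
theorem edge_chromatic_transformation_index_le_five_of_halin
    {V : Type*} [Fintype V] (G : SimpleGraph V) (hH : IsHalin G) :
    transIdx G ≤ 5 ∧
    ∀ f g, IsProperEdgeColoring G (chromIdx G) f → IsProperEdgeColoring G (chromIdx G) g →
      NEquiv G (chromIdx G) 5 f g := by
  have hmain : ∀ f g, IsProperEdgeColoring G (chromIdx G) f →
      IsProperEdgeColoring G (chromIdx G) g → NEquiv G (chromIdx G) 5 f g := by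
    intro f g hf hg
    obtain ⟨-, -, T, hTG, hT, -, x₀, c, hc, hce, hcs⟩ := hH
    apply nEquiv_of_reach hf
    rcases Nat.lt_or_ge (chromIdx G) 6 with ht | ht
    · -- With at most five colors, no two colorings differ by more than five classes.
      refine Relation.ReflTransGen.single ⟨hf, hg, ?_⟩
      apply differAtMost_of_forall (Finset.Icc 1 (chromIdx G))
      · rw [Nat.card_Icc]
        omega
      · exact fun e he _ => ⟨hf.1 e he, hg.1 e he⟩
    · exact reach_of_sparseRim hTG hT (sparseRim_of_isHalin hc hce hcs) ht hf hg
  exact ⟨Nat.sInf_le ⟨by norm_num, hmain⟩, hmain⟩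

end EdgeTrans
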